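/- Let μ_A, μ_B, μ_C ∈ ℝ. The function F on ℝ¹² = ℂ⁴ × ℂ × ℂ (coordinates ζₖ = xₖ + i·yₖ, k = 1,…,6) given by F = μ_A·arg(√(ζ₁² + ζ₂² + ζ₃² + ζ₄²)) + μ_B·arg(ζ₅) + μ_C·arg(ζ₆), i.e. F = (μ_A/2)·arctan(2(x₁y₁+⋯+x₄y₄)/((x₁²−y₁²)+⋯+(x₄²−y₄²))) + μ_B·arctan(y₅/x₅) + μ_C·arctan(y₆/x₆), is harmonic and infinity-harmonic on the open set where (x₁²+⋯+x₄²) − (y₁²+⋯+y₄²) ≠ 0, x₅ ≠ 0 and x₆ ≠ 0, and hence satisfies the minimal hypersurface equation (1 + ‖∇F‖²)·ΔF − Δ_∞F = 0; thus its (multi-valued) graph z = F is minimal in ℝ¹³. -/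

import Mathlib

/-!
Write `Q = ζ₁² + ζ₂² + ζ₃² + ζ₄² = D + iN`. Up to locally constant terms `F` is the imaginary part
of the holomorphic function `(μ_A / 2) log Q + μ_B log ζ₅ + μ_C log ζ₆`, so it is harmonic, and its
gradient, as a complex vector, is `i` times the conjugate of `(μ_A ζₖ / Q, μ_B / ζ₅, μ_C / ζ₆)`.

For infinity-harmonicity, contracting one index gives `Δ_∞F = ⟨∇F, (D²F) ∇F⟩` and the three summands
of `F` depend on disjoint sets of variables, so each block can be treated alone. In the first block
the key fact is that `|Q|² = D² + N²` is constant to first order in the direction `∇F`; the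
contribution of the index `k` then reduces to `μ_A³ |Q|⁻⁴ (D · 2xₖyₖ - N (xₖ² - yₖ²))`, and these
sum to a multiple of `D N - N D = 0`. In the blocks `ζ₅`, `ζ₆` the contribution vanishes directly.

The derivatives are computed explicitly: `pd_F12` identifies the gradient with `gradF`, and
`fderiv_pd_F12` identifies the directional derivatives of the gradient with `hessF`.
-/

noncomputable section

variable {ι : Type*} [Fintype ι] [DecidableEq ι]

/-- The `i`-th partial derivative `∂F/∂zᵢ` of `F : ℝ^ι → ℝ` at `x`. -/
def pd (F : EuclideanSpace ℝ ι → ℝ) (x : EuclideanSpace ℝ ι) (i : ι) : ℝ :=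
  fderiv ℝ F x (EuclideanSpace.single i 1)

/-- The Laplacian `ΔF = Σᵢ ∂²F/∂zᵢ²` at `x`. -/
def lap (F : EuclideanSpace ℝ ι → ℝ) (x : EuclideanSpace ℝ ι) : ℝ :=
  ∑ i, fderiv ℝ (fun y => pd F y i) x (EuclideanSpace.single i 1)

/-- The infinity-Laplacian `Δ_∞F = Σ_{i,j} (∂F/∂zᵢ)(∂F/∂zⱼ)(∂²F/∂zᵢ∂zⱼ)` at `x`. -/
def infLap (F : EuclideanSpace ℝ ι → ℝ) (x : EuclideanSpace ℝ ι) : ℝ :=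
  ∑ i, ∑ j, pd F x i * pd F x j * fderiv ℝ (fun y => pd F y i) x (EuclideanSpace.single j 1)

/-- The squared norm `‖∇F‖²` of the gradient of `F` at `x`. -/
def gradSq (F : EuclideanSpace ℝ ι → ℝ) (x : EuclideanSpace ℝ ι) : ℝ :=
  ∑ i, (pd F x i) ^ 2

/-- The superposed helicoid height function on `ℝ¹² = ℂ⁴ × ℂ × ℂ`: coordinates
`xₖ = z (inl (inl k))`, `yₖ = z (inl (inr k))` for `k = 1,…,4`, and
`x₅,x₆ = z (inr (inl 0)), z (inr (inl 1))`, `y₅,y₆ = z (inr (inr 0)), z (inr (inr 1))`. -/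
def F12 (μA μB μC : ℝ)
    (z : EuclideanSpace ℝ ((Fin 4 ⊕ Fin 4) ⊕ (Fin 2 ⊕ Fin 2))) : ℝ :=
  (μA / 2) * Real.arctan
      ((2 * ∑ k : Fin 4, z (Sum.inl (Sum.inl k)) * z (Sum.inl (Sum.inr k))) /
        (∑ k : Fin 4, ((z (Sum.inl (Sum.inl k))) ^ 2 - (z (Sum.inl (Sum.inr k))) ^ 2)))
    + μB * Real.arctan (z (Sum.inr (Sum.inr 0)) / z (Sum.inr (Sum.inl 0)))
    + μC * Real.arctan (z (Sum.inr (Sum.inr 1)) / z (Sum.inr (Sum.inl 1)))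


/-- The index set of the twelve real coordinates. -/
abbrev Idx := (Fin 4 ⊕ Fin 4) ⊕ (Fin 2 ⊕ Fin 2)

/-- The real part `Σ (xₖ² - yₖ²)` of `ζ₁² + ζ₂² + ζ₃² + ζ₄²`. -/
def reQ (z : EuclideanSpace ℝ Idx) : ℝ :=
  ∑ k : Fin 4, ((z (Sum.inl (Sum.inl k))) ^ 2 - (z (Sum.inl (Sum.inr k))) ^ 2)

/-- The imaginary part `2 Σ xₖ yₖ` of `ζ₁² + ζ₂² + ζ₃² + ζ₄²`. -/
def imQ (z : EuclideanSpace ℝ Idx) : ℝ :=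
  2 * ∑ k : Fin 4, z (Sum.inl (Sum.inl k)) * z (Sum.inl (Sum.inr k))

/-- The differential of `reQ` at `z`. -/
def dReQ (z : EuclideanSpace ℝ Idx) : EuclideanSpace ℝ Idx →L[ℝ] ℝ :=
  ∑ k : Fin 4, ((2 * z (Sum.inl (Sum.inl k))) • EuclideanSpace.proj (Sum.inl (Sum.inl k))
    - (2 * z (Sum.inl (Sum.inr k))) • EuclideanSpace.proj (Sum.inl (Sum.inr k)))

/-- The differential of `imQ` at `z`. -/
def dImQ (z : EuclideanSpace ℝ Idx) : EuclideanSpace ℝ Idx →L[ℝ] ℝ :=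
  (2 : ℝ) • ∑ k : Fin 4, (z (Sum.inl (Sum.inl k)) • EuclideanSpace.proj (Sum.inl (Sum.inr k))
    + z (Sum.inl (Sum.inr k)) • EuclideanSpace.proj (Sum.inl (Sum.inl k)))

lemma hasFDerivAt_coord (z : EuclideanSpace ℝ Idx) (i : Idx) :
    HasFDerivAt (fun y : EuclideanSpace ℝ Idx => y i)
      (EuclideanSpace.proj i : EuclideanSpace ℝ Idx →L[ℝ] ℝ) z :=
  (EuclideanSpace.proj i : EuclideanSpace ℝ Idx →L[ℝ] ℝ).hasFDerivAt

lemma hasFDerivAt_reQ (z : EuclideanSpace ℝ Idx) : HasFDerivAt reQ (dReQ z) z := by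
  refine HasFDerivAt.fun_sum fun k _ => ?_
  refine (((hasFDerivAt_coord z (Sum.inl (Sum.inl k))).pow 2).fun_sub
    ((hasFDerivAt_coord z (Sum.inl (Sum.inr k))).pow 2)).congr_fderiv ?_
  ext w
  simp

lemma hasFDerivAt_imQ (z : EuclideanSpace ℝ Idx) : HasFDerivAt imQ (dImQ z) z :=
  (HasFDerivAt.fun_sum fun k _ => (hasFDerivAt_coord z (Sum.inl (Sum.inl k))).mul
    (hasFDerivAt_coord z (Sum.inl (Sum.inr k)))).const_mul 2

lemma dReQ_apply (z w : EuclideanSpace ℝ Idx) :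
    dReQ z w = ∑ k : Fin 4, (2 * z (Sum.inl (Sum.inl k)) * w (Sum.inl (Sum.inl k))
      - 2 * z (Sum.inl (Sum.inr k)) * w (Sum.inl (Sum.inr k))) := by
  simp [dReQ]

lemma dImQ_apply (z w : EuclideanSpace ℝ Idx) :
    dImQ z w = 2 * ∑ k : Fin 4, (z (Sum.inl (Sum.inl k)) * w (Sum.inl (Sum.inr k))
      + z (Sum.inl (Sum.inr k)) * w (Sum.inl (Sum.inl k))) := by
  simp [dImQ]

lemma hasFDerivAt_div {f g : EuclideanSpace ℝ Idx → ℝ}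
    {f' g' : EuclideanSpace ℝ Idx →L[ℝ] ℝ} {z : EuclideanSpace ℝ Idx}
    (hf : HasFDerivAt f f' z) (hg : HasFDerivAt g g' z) (h : g z ≠ 0) :
    HasFDerivAt (fun y => f y / g y) ((g z ^ 2)⁻¹ • (g z • f' - f z • g')) z := by
  simp only [div_eq_mul_inv]
  refine (hf.fun_mul ((hasDerivAt_inv h).comp_hasFDerivAt z hg)).congr_fderiv ?_
  ext w
  simp
  field_simp
  ring

/-- The differential of `arctan (f / g)`, the angle of the planar vector `(g, f)`. -/
lemma hasFDerivAt_arctan_div {f g : EuclideanSpace ℝ Idx → ℝ}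
    {f' g' : EuclideanSpace ℝ Idx →L[ℝ] ℝ} {z : EuclideanSpace ℝ Idx}
    (hf : HasFDerivAt f f' z) (hg : HasFDerivAt g g' z) (h : g z ≠ 0) :
    HasFDerivAt (fun y => Real.arctan (f y / g y))
      ((g z ^ 2 + f z ^ 2)⁻¹ • (g z • f' - f z • g')) z := by
  refine (hasFDerivAt_div hf hg h).arctan.congr_fderiv ?_
  ext w
  have h2 : g z ^ 2 + f z ^ 2 ≠ 0 := by positivity
  have h3 : 1 + (f z / g z) ^ 2 ≠ 0 := by positivity
  simp
  field_simp

/-- The derivative of `μ f / (a² + b²)` in the direction `w`; every component of `gradF` has this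
shape. -/
lemma fderiv_div_normSq {f a b : EuclideanSpace ℝ Idx → ℝ}
    {f' a' b' : EuclideanSpace ℝ Idx →L[ℝ] ℝ} {z : EuclideanSpace ℝ Idx}
    (hf : HasFDerivAt f f' z) (ha : HasFDerivAt a a' z) (hb : HasFDerivAt b b' z)
    (h : a z ≠ 0) (μ : ℝ) (w : EuclideanSpace ℝ Idx) :
    fderiv ℝ (fun y => μ * (f y / (a y ^ 2 + b y ^ 2))) z w =
      μ * (f' w * (a z ^ 2 + b z ^ 2) - f z * (2 * a z * a' w + 2 * b z * b' w))
        / (a z ^ 2 + b z ^ 2) ^ 2 := by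
  have h2 : a z ^ 2 + b z ^ 2 ≠ 0 := by positivity
  rw [((hasFDerivAt_div hf ((ha.pow 2).fun_add (hb.pow 2)) h2).const_mul μ).fderiv]
  simp
  field_simp

/-- The closed form of the gradient of `F12`, valid where `reQ z`, `x₅` and `x₆` do not vanish. -/
def gradF (μA μB μC : ℝ) (z : EuclideanSpace ℝ Idx) : Idx → ℝ
  | Sum.inl (Sum.inl k) => μA * ((reQ z * z (Sum.inl (Sum.inr k))
      - imQ z * z (Sum.inl (Sum.inl k))) / (reQ z ^ 2 + imQ z ^ 2))
  | Sum.inl (Sum.inr k) => μA * ((reQ z * z (Sum.inl (Sum.inl k))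
      + imQ z * z (Sum.inl (Sum.inr k))) / (reQ z ^ 2 + imQ z ^ 2))
  | Sum.inr (Sum.inl k) => (![μB, μC] k) * (-z (Sum.inr (Sum.inr k))
      / (z (Sum.inr (Sum.inl k)) ^ 2 + z (Sum.inr (Sum.inr k)) ^ 2))
  | Sum.inr (Sum.inr k) => (![μB, μC] k) * (z (Sum.inr (Sum.inl k))
      / (z (Sum.inr (Sum.inl k)) ^ 2 + z (Sum.inr (Sum.inr k)) ^ 2))

lemma pd_F12 (μA μB μC : ℝ) (z : EuclideanSpace ℝ Idx) (h1 : reQ z ≠ 0)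
    (h5 : z (Sum.inr (Sum.inl 0)) ≠ 0) (h6 : z (Sum.inr (Sum.inl 1)) ≠ 0) (i : Idx) :
    pd (F12 μA μB μC) z i = gradF μA μB μC z i := by
  have h : HasFDerivAt (F12 μA μB μC) _ z :=
    (((hasFDerivAt_arctan_div (hasFDerivAt_imQ z) (hasFDerivAt_reQ z) h1).const_mul (μA / 2)).fun_add
      ((hasFDerivAt_arctan_div (hasFDerivAt_coord z _) (hasFDerivAt_coord z _) h5).const_mul
        μB)).fun_add
      ((hasFDerivAt_arctan_div (hasFDerivAt_coord z (Sum.inr (Sum.inr 1)))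
        (hasFDerivAt_coord z _) h6).const_mul μC)
  rw [pd, h.fderiv]
  rcases i with (k | k) | (k | k)
  · simp [gradF, dReQ_apply, dImQ_apply]
    ring
  · simp [gradF, dReQ_apply, dImQ_apply]
    ring
  · fin_cases k <;> simp [gradF, dReQ_apply, dImQ_apply] <;> ring
  · fin_cases k <;> simp [gradF, dReQ_apply, dImQ_apply] <;> exact Or.inl (by ring)

/-- The derivative at `z`, in the direction `w`, of the `i`-th component of `gradF`: the closed form
of the `i`-th component of the Hessian of `F12` applied to `w`. -/
def hessF (μA μB μC : ℝ) (z w : EuclideanSpace ℝ Idx) : Idx → ℝ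
  | Sum.inl (Sum.inl k) => μA * ((dReQ z w * z (Sum.inl (Sum.inr k))
      + reQ z * w (Sum.inl (Sum.inr k)) - (dImQ z w * z (Sum.inl (Sum.inl k))
      + imQ z * w (Sum.inl (Sum.inl k)))) * (reQ z ^ 2 + imQ z ^ 2)
      - (reQ z * z (Sum.inl (Sum.inr k)) - imQ z * z (Sum.inl (Sum.inl k)))
        * (2 * reQ z * dReQ z w + 2 * imQ z * dImQ z w)) / (reQ z ^ 2 + imQ z ^ 2) ^ 2
  | Sum.inl (Sum.inr k) => μA * ((dReQ z w * z (Sum.inl (Sum.inl k))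
      + reQ z * w (Sum.inl (Sum.inl k)) + (dImQ z w * z (Sum.inl (Sum.inr k))
      + imQ z * w (Sum.inl (Sum.inr k)))) * (reQ z ^ 2 + imQ z ^ 2)
      - (reQ z * z (Sum.inl (Sum.inl k)) + imQ z * z (Sum.inl (Sum.inr k)))
        * (2 * reQ z * dReQ z w + 2 * imQ z * dImQ z w)) / (reQ z ^ 2 + imQ z ^ 2) ^ 2
  | Sum.inr (Sum.inl k) => (![μB, μC] k) * (-w (Sum.inr (Sum.inr k))
      * (z (Sum.inr (Sum.inl k)) ^ 2 + z (Sum.inr (Sum.inr k)) ^ 2) - -z (Sum.inr (Sum.inr k))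
      * (2 * z (Sum.inr (Sum.inl k)) * w (Sum.inr (Sum.inl k))
        + 2 * z (Sum.inr (Sum.inr k)) * w (Sum.inr (Sum.inr k))))
      / (z (Sum.inr (Sum.inl k)) ^ 2 + z (Sum.inr (Sum.inr k)) ^ 2) ^ 2
  | Sum.inr (Sum.inr k) => (![μB, μC] k) * (w (Sum.inr (Sum.inl k))
      * (z (Sum.inr (Sum.inl k)) ^ 2 + z (Sum.inr (Sum.inr k)) ^ 2) - z (Sum.inr (Sum.inl k))
      * (2 * z (Sum.inr (Sum.inl k)) * w (Sum.inr (Sum.inl k))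
        + 2 * z (Sum.inr (Sum.inr k)) * w (Sum.inr (Sum.inr k))))
      / (z (Sum.inr (Sum.inl k)) ^ 2 + z (Sum.inr (Sum.inr k)) ^ 2) ^ 2

lemma fderiv_pd_F12 (μA μB μC : ℝ) (z : EuclideanSpace ℝ Idx) (h1 : reQ z ≠ 0)
    (h5 : z (Sum.inr (Sum.inl 0)) ≠ 0) (h6 : z (Sum.inr (Sum.inl 1)) ≠ 0) (i : Idx)
    (w : EuclideanSpace ℝ Idx) :
    fderiv ℝ (fun y => pd (F12 μA μB μC) y i) z w = hessF μA μB μC z w i := by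
  -- The closed form of the gradient holds near `z`, so it may be differentiated.
  have hev : (fun y => pd (F12 μA μB μC) y i) =ᶠ[nhds z] fun y => gradF μA μB μC y i := by
    filter_upwards [(hasFDerivAt_reQ z).continuousAt.eventually_ne h1,
      (hasFDerivAt_coord z _).continuousAt.eventually_ne h5,
      (hasFDerivAt_coord z _).continuousAt.eventually_ne h6] with y a b c
    exact pd_F12 μA μB μC y a b c i
  have hk : ∀ k : Fin 2, z (Sum.inr (Sum.inl k)) ≠ 0 := by
    intro k; fin_cases k <;> assumption
  rw [hev.fderiv_eq]
  have hR := hasFDerivAt_reQ z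
  have hI := hasFDerivAt_imQ z
  have hc := hasFDerivAt_coord z
  rcases i with (k | k) | (k | k)
  · simp only [gradF, hessF]
    rw [fderiv_div_normSq ((hR.fun_mul (hc _)).fun_sub (hI.fun_mul (hc _))) hR hI h1]
    simp
    ring
  · simp only [gradF, hessF]
    rw [fderiv_div_normSq ((hR.fun_mul (hc _)).fun_add (hI.fun_mul (hc _))) hR hI h1]
    simp
    ring
  · simp only [gradF, hessF]
    rw [fderiv_div_normSq (hc _).fun_neg (hc _) (hc _) (hk k)]
    simp
  · simp only [gradF, hessF]
    rw [fderiv_div_normSq (hc _) (hc _) (hc _) (hk k)]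
    simp

/-- `F = μ_A·arg(√(ζ₁²+⋯+ζ₄²)) + μ_B·arg(ζ₅) + μ_C·arg(ζ₆)` is harmonic
and infinity-harmonic on the open set where `(x₁²+⋯+x₄²) − (y₁²+⋯+y₄²) ≠ 0`, `x₅ ≠ 0`,
`x₆ ≠ 0`, and satisfies the minimal hypersurface equation, so its (multi-valued) graph
`z = F` is minimal in `ℝ¹³`. -/
theorem superposed_helicoid_minimal (μA μB μC : ℝ)
    (z : EuclideanSpace ℝ ((Fin 4 ⊕ Fin 4) ⊕ (Fin 2 ⊕ Fin 2)))
    (h1 : (∑ k : Fin 4, ((z (Sum.inl (Sum.inl k))) ^ 2 - (z (Sum.inl (Sum.inr k))) ^ 2)) ≠ 0)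
    (h5 : z (Sum.inr (Sum.inl 0)) ≠ 0) (h6 : z (Sum.inr (Sum.inl 1)) ≠ 0) :
    lap (F12 μA μB μC) z = 0 ∧ infLap (F12 μA μB μC) z = 0 ∧
    (1 + gradSq (F12 μA μB μC) z) * lap (F12 μA μB μC) z - infLap (F12 μA μB μC) z = 0 := by
  change reQ z ≠ 0 at h1
  have hr : reQ z ^ 2 + imQ z ^ 2 ≠ 0 := by positivity
  have hlap : lap (F12 μA μB μC) z = 0 := by
    simp only [lap, fderiv_pd_F12 μA μB μC z h1 h5 h6, Fintype.sum_sum_type]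
    -- The `xₖ` and `yₖ` second derivatives cancel for each `k` separately.
    have e1 : (∑ k : Fin 4, hessF μA μB μC z
          (EuclideanSpace.single (Sum.inl (Sum.inl k)) 1) (Sum.inl (Sum.inl k))) +
        ∑ k : Fin 4, hessF μA μB μC z
          (EuclideanSpace.single (Sum.inl (Sum.inr k)) 1) (Sum.inl (Sum.inr k)) = 0 := by
      rw [← Finset.sum_add_distrib]
      refine Finset.sum_eq_zero fun k _ => ?_
      simp [hessF, dReQ_apply, dImQ_apply]
      ring
    have e2 : ∀ k : Fin 2, hessF μA μB μC z
          (EuclideanSpace.single (Sum.inr (Sum.inl k)) 1) (Sum.inr (Sum.inl k)) +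
        hessF μA μB μC z
          (EuclideanSpace.single (Sum.inr (Sum.inr k)) 1) (Sum.inr (Sum.inr k)) = 0 := by
      intro k
      simp [hessF]
      ring
    rw [e1, ← Finset.sum_add_distrib]
    simp [e2]
  have hinf : infLap (F12 μA μB μC) z = 0 := by
    -- `v` is the gradient of `F` at `z`, as a vector.
    set v : EuclideanSpace ℝ Idx := WithLp.toLp 2 (gradF μA μB μC z) with hv
    have hv' : v = ∑ j, gradF μA μB μC z j • EuclideanSpace.single j (1 : ℝ) := by
      ext i
      rw [WithLp.ofLp_sum, Finset.sum_apply]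
      simp only [PiLp.smul_apply, PiLp.single_apply, smul_eq_mul, mul_ite, mul_one,
        mul_zero, Finset.sum_ite_eq, Finset.mem_univ, if_true, hv]
    have key : infLap (F12 μA μB μC) z = ∑ i, gradF μA μB μC z i * hessF μA μB μC z v i := by
      unfold infLap
      refine Finset.sum_congr rfl fun i _ => ?_
      rw [← fderiv_pd_F12 μA μB μC z h1 h5 h6, hv', map_sum, Finset.mul_sum]
      refine Finset.sum_congr rfl fun j _ => ?_
      rw [pd_F12 μA μB μC z h1 h5 h6, pd_F12 μA μB μC z h1 h5 h6, map_smul, smul_eq_mul, mul_assoc]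
    rw [key]
    -- `|Q|²` is stationary in the direction of the gradient.
    have e0 : reQ z * dReQ z v + imQ z * dImQ z v = 0 := by
      simp only [dReQ_apply, dImQ_apply, hv, gradF]
      simp only [Fin.sum_univ_four]
      ring
    have vxA : ∀ k, v (Sum.inl (Sum.inl k)) = gradF μA μB μC z (Sum.inl (Sum.inl k)) := fun _ => rfl
    have vyA : ∀ k, v (Sum.inl (Sum.inr k)) = gradF μA μB μC z (Sum.inl (Sum.inr k)) := fun _ => rfl
    have vxB : ∀ k, v (Sum.inr (Sum.inl k)) = gradF μA μB μC z (Sum.inr (Sum.inl k)) := fun _ => rfl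
    have vyB : ∀ k, v (Sum.inr (Sum.inr k)) = gradF μA μB μC z (Sum.inr (Sum.inr k)) := fun _ => rfl
    have eA : ∀ k : Fin 4,
        gradF μA μB μC z (Sum.inl (Sum.inl k)) * hessF μA μB μC z v (Sum.inl (Sum.inl k)) +
        gradF μA μB μC z (Sum.inl (Sum.inr k)) * hessF μA μB μC z v (Sum.inl (Sum.inr k)) =
        μA ^ 3 / (reQ z ^ 2 + imQ z ^ 2) ^ 2 *
          (reQ z * (2 * (z (Sum.inl (Sum.inl k)) * z (Sum.inl (Sum.inr k)))) -
            imQ z * (z (Sum.inl (Sum.inl k)) ^ 2 - z (Sum.inl (Sum.inr k)) ^ 2)) := by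
      intro k
      have e0' : 2 * reQ z * dReQ z v + 2 * imQ z * dImQ z v = 0 := by linear_combination 2 * e0
      simp only [hessF, e0', vxA, vyA, gradF]
      field_simp
      linear_combination μA ^ 2 * (reQ z ^ 2 + imQ z ^ 2) *
        (z (Sum.inl (Sum.inl k)) ^ 2 + z (Sum.inl (Sum.inr k)) ^ 2) * e0
    have eB : ∀ k : Fin 2,
        gradF μA μB μC z (Sum.inr (Sum.inl k)) * hessF μA μB μC z v (Sum.inr (Sum.inl k)) +
        gradF μA μB μC z (Sum.inr (Sum.inr k)) * hessF μA μB μC z v (Sum.inr (Sum.inr k)) = 0 := by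
      intro k
      simp only [hessF, vxB, vyB, gradF]
      ring
    simp only [Fintype.sum_sum_type]
    rw [← Finset.sum_add_distrib, ← Finset.sum_add_distrib, Finset.sum_congr rfl fun k _ => eA k,
      Finset.sum_congr rfl fun k _ => eB k, ← Finset.mul_sum, Finset.sum_sub_distrib,
      ← Finset.mul_sum, ← Finset.mul_sum, ← Finset.mul_sum]
    -- The remaining sums over `k` are, by definition, `imQ z` and `reQ z`.
    change _ * (reQ z * imQ z - imQ z * reQ z) + _ = 0
    simp [mul_comm]
  refine ⟨hlap, hinf, ?_⟩
  rw [hlap, hinf]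
  ring
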